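/- Poincaré–Miranda theorem: Let f_1,…,f_r : [0,1]^r → ℝ be continuous functions such that for all i, x_i = 0 implies f_i(x) ≤ 0 and x_i = 1 implies f_i(x) ≥ 0. Then there exists a point x ∈ [0,1]^r with f_i(x) = 0 for all i. -/

import Mathlib

namespace PM
open Finset

variable {ι : Type} [DecidableEq ι]

/-- The mod 2 cup product of the coboundaries of the labels in a list, evaluated on the
cube based at `p` with directions `S`. -/
def W (l : ι → (ι → ℕ) → ZMod 2) : List ι → (ι → ℕ) → Finset ι → ZMod 2
  | [], _, _ => 1
  | a :: L, p, S => ∑ i ∈ S, (l a (p + Pi.single i 1) - l a p) *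
      W l L (p + Pi.single i 1) (S.erase i)

lemma sum_symm_zero (S : Finset ι) (F : ι → ι → ZMod 2) (h : ∀ i j, F i j = F j i) :
    ∑ i ∈ S, ∑ j ∈ S.erase i, F i j = 0 := by
  induction S using Finset.induction_on with
  | empty => simp
  | insert a s ha ih =>
    rw [Finset.sum_insert ha, Finset.erase_insert ha]
    have : ∀ i ∈ s, ∑ j ∈ (insert a s).erase i, F i j = F a i + ∑ j ∈ s.erase i, F i j := by
      intro i hi
      have hne : a ≠ i := by rintro rfl; exact ha hi
      rw [Finset.erase_insert_of_ne hne, Finset.sum_insert (by simp [ha]), h i a]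
    rw [Finset.sum_congr rfl this, Finset.sum_add_distrib, ih, add_zero]
    exact CharTwo.add_self_eq_zero _

lemma sum_erase_comm (S : Finset ι) (F : ι → ι → ZMod 2) :
    ∑ i ∈ S, ∑ j ∈ S.erase i, F i j = ∑ i ∈ S, ∑ j ∈ S.erase i, F j i := by
  apply Finset.sum_comm'
  intro x y
  simp only [Finset.mem_erase]
  tauto

lemma closed (l : ι → (ι → ℕ) → ZMod 2) (L : List ι) : ∀ (p : ι → ℕ) (S : Finset ι),
    ∑ i ∈ S, W l L (p + Pi.single i 1) (S.erase i) = ∑ i ∈ S, W l L p (S.erase i) := by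
  induction L with
  | nil => intro p S; simp [W]
  | cons a L ih =>
    intro p S
    simp only [W]
    set G : ι → ι → ZMod 2 := fun i j =>
      W l L (p + Pi.single i 1 + Pi.single j 1) ((S.erase i).erase j) with hG
    have hGs : ∀ i j, G i j = G j i := by
      intro i j
      simp only [hG]
      rw [add_right_comm, Finset.erase_right_comm]
    have e1 : ∑ i ∈ S, ∑ j ∈ S.erase i, l a (p + Pi.single i 1 + Pi.single j 1) * G i j = 0 := by
      apply sum_symm_zero
      intro i j
      rw [hGs i j, add_right_comm]
    have e2 : ∑ i ∈ S, ∑ j ∈ S.erase i, l a p * G i j = 0 := by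
      apply sum_symm_zero
      intro i j
      rw [hGs i j]
    have lhs : ∑ i ∈ S, ∑ j ∈ S.erase i, (l a (p + Pi.single i 1 + Pi.single j 1) -
        l a (p + Pi.single i 1)) * W l L (p + Pi.single i 1 + Pi.single j 1) ((S.erase i).erase j)
        = - ∑ i ∈ S, ∑ j ∈ S.erase i, l a (p + Pi.single i 1) * G i j := by
      simp only [sub_mul, Finset.sum_sub_distrib]
      rw [e1, zero_sub]
    rw [lhs]
    have rhs : ∀ i ∈ S, ∑ j ∈ S.erase i, (l a (p + Pi.single i 1) - l a p) *
        W l L (p + Pi.single i 1) ((S.erase j).erase i) =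
        ∑ j ∈ S.erase i, (l a (p + Pi.single i 1) - l a p) * G i j := by
      intro i hi
      rw [← Finset.mul_sum, ← Finset.mul_sum, ih (p + Pi.single i 1) (S.erase i)]
      congr 1
      apply Finset.sum_congr rfl
      intro j hj
      rw [Finset.erase_right_comm]
    refine Eq.trans ?_ (sum_erase_comm S (fun i j => (l a (p + Pi.single j 1) - l a p) *
        W l L (p + Pi.single j 1) ((S.erase i).erase j))).symm
    rw [Finset.sum_congr rfl rhs]
    simp only [sub_mul, Finset.sum_sub_distrib]
    rw [e2, sub_zero, CharTwo.neg_eq]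

lemma W_cons (l : ι → (ι → ℕ) → ZMod 2) (a : ι) (L : List ι) (p : ι → ℕ) (S : Finset ι) :
    W l (a :: L) p S = ∑ i ∈ S, (l a (p + Pi.single i 1) * W l L (p + Pi.single i 1) (S.erase i)
      - l a p * W l L p (S.erase i)) := by
  simp only [W, sub_mul, Finset.sum_sub_distrib]
  rw [← Finset.mul_sum, ← Finset.mul_sum, closed]

lemma W_zero (l : ι → (ι → ℕ) → ZMod 2) (b : ι) (c : ℕ) (z : ZMod 2)
    (hl : ∀ p, p b = c → l b p = z) (L : List ι) : ∀ (p : ι → ℕ) (S : Finset ι),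
    b ∈ L → b ∉ S → p b = c → W l L p S = 0 := by
  induction L with
  | nil => simp
  | cons a L ih =>
    intro p S hb hS hp
    simp only [W]
    apply Finset.sum_eq_zero
    intro i hi
    have hib : b ≠ i := by rintro rfl; exact hS hi
    have hp' : (p + Pi.single i 1 : ι → ℕ) b = c := by simp [Pi.single_apply, hib, hp]
    by_cases hab : b = a
    · subst hab
      rw [hl _ hp', hl _ hp]; simp
    · rw [ih _ _ (by simpa [hab] using hb) (by simp [hS]) hp', mul_zero]

lemma W_ne (l : ι → (ι → ℕ) → ZMod 2) (L : List ι) : ∀ (p : ι → ℕ) (S : Finset ι),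
    W l L p S ≠ 0 → ∀ b ∈ L, ∃ u v : ι → ℕ, p ≤ u ∧ p ≤ v ∧
      (∀ j, u j ≤ p j + if j ∈ S then 1 else 0) ∧ (∀ j, v j ≤ p j + if j ∈ S then 1 else 0) ∧
      l b u ≠ l b v := by
  induction L with
  | nil => simp
  | cons a L ih =>
    intro p S h b hb
    simp only [W] at h
    obtain ⟨i, hi, hne⟩ := Finset.exists_ne_zero_of_sum_ne_zero h
    have key : ∀ u : ι → ℕ, (∀ j, u j ≤ (p + Pi.single i 1 : ι → ℕ) j + if j ∈ S.erase i then 1 else 0) →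
        ∀ j, u j ≤ p j + if j ∈ S then 1 else 0 := by
      intro u hu j
      have := hu j
      by_cases hj : j = i
      · subst hj; simpa [hi] using this
      · simpa [hj, Pi.single_apply] using this
    have hle : p ≤ p + Pi.single i 1 := by intro j; simp
    rcases List.mem_cons.1 hb with rfl | hb
    · refine ⟨p + Pi.single i 1, p, hle, le_refl _, key _ (by intro j; simp), by intro j; simp, ?_⟩
      intro he
      rw [he] at hne
      simp at hne
    · obtain ⟨u, v, h1, h2, h3, h4, h5⟩ := ih _ _ (right_ne_zero_of_mul hne) b hb
      exact ⟨u, v, hle.trans h1, hle.trans h2, key _ h3, key _ h4, h5⟩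

variable [Fintype ι]

lemma sum_split (s : ι → Finset ℕ) (i : ι) (c : ℕ) (G : (ι → ℕ) → ZMod 2) :
    ∑ p ∈ Fintype.piFinset s, G p =
    ∑ p ∈ Fintype.piFinset (Function.update s i {c}), ∑ k ∈ s i, G (Function.update p i k) := by
  rw [← Finset.sum_product']
  refine Finset.sum_bij' (fun p _ => (Function.update p i c, p i))
    (fun q _ => Function.update q.1 i q.2) ?_ ?_ ?_ ?_ ?_
  · intro p hp
    simp only [Fintype.mem_piFinset, Finset.mem_product] at hp ⊢
    refine ⟨fun j => ?_, hp i⟩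
    by_cases h : j = i
    · subst h; simp
    · simp [h, hp j]
  · rintro ⟨p, k⟩ hp
    simp only [Fintype.mem_piFinset, Finset.mem_product] at hp ⊢
    intro j
    by_cases h : j = i
    · subst h; simpa using hp.2
    · simpa [h] using hp.1 j
  · intro p hp
    simp
  · rintro ⟨p, k⟩ hp
    simp only [Fintype.mem_piFinset, Finset.mem_product] at hp
    have := hp.1 i
    simp at this
    simp [← this]
  · intro p hp
    simp

lemma sum_tele (s : ι → Finset ℕ) (i : ι) (N : ℕ) (hs : s i = range N)
    (F : (ι → ℕ) → ZMod 2) :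
    ∑ p ∈ Fintype.piFinset s, (F (p + Pi.single i 1) - F p) =
    ∑ p ∈ Fintype.piFinset (Function.update s i {N}), F p -
    ∑ p ∈ Fintype.piFinset (Function.update s i {0}), F p := by
  rw [sum_split s i 0, hs]
  rw [sum_split (Function.update s i {N}) i 0]
  simp only [Function.update_idem, Function.update_self, Finset.sum_singleton]
  rw [← Finset.sum_sub_distrib]
  apply Finset.sum_congr rfl
  intro p hp
  have h0 : p i = 0 := by
    have := Fintype.mem_piFinset.1 hp i
    simpa using this
  have : ∀ k, Function.update p i k + Pi.single i 1 = Function.update p i (k+1) := by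
    intro k
    ext j
    by_cases h : j = i
    · subst h; simp
    · simp [h]
  simp only [this]
  rw [Finset.sum_range_sub (fun k => F (Function.update p i k))]
  rw [← h0, Function.update_eq_self]

lemma total (l : ι → (ι → ℕ) → ZMod 2) (N : ℕ)
    (h0 : ∀ i p, p i = 0 → l i p = 0) (h1 : ∀ i p, p i = N → l i p = 1) (L : List ι) :
    L.Nodup → ∑ p ∈ Fintype.piFinset (fun j => if j ∈ L.toFinset then range N else {N}),
      W l L p L.toFinset = 1 := by
  induction L with
  | nil =>
    intro _
    simp [W, Fintype.piFinset_singleton]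
  | cons a L ih =>
    intro hL
    have hL' := List.nodup_cons.1 hL
    simp only [W_cons]
    rw [Finset.sum_comm]
    have ha : a ∈ (a :: L).toFinset := by simp
    have hst : ∀ i ∈ (a :: L).toFinset, ∀ F : (ι → ℕ) → ZMod 2, _ := fun i hi F =>
      sum_tele (fun j => if j ∈ (a :: L).toFinset then range N else {N}) i N (if_pos hi) F
    rw [Finset.sum_congr rfl (fun i hi => hst i hi
      (fun p => l a p * W l L p ((a :: L).toFinset.erase i)))]
    rw [Finset.sum_eq_single_of_mem a ha]
    · have he : (a :: L).toFinset.erase a = L.toFinset := by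
        rw [List.toFinset_cons, Finset.erase_insert (by simpa using hL'.1)]
      have hu : Function.update (fun j => if j ∈ (a :: L).toFinset then range N else {N}) a {N}
          = fun j => if j ∈ L.toFinset then range N else {N} := by
        ext1 j
        by_cases h : j = a
        · subst h; simp [hL'.1]
        · simp [h]
      rw [he]
      rw [Finset.sum_eq_zero (s := Fintype.piFinset (Function.update _ a {0})), sub_zero, hu,
        ← ih hL'.2]
      · apply Finset.sum_congr rfl
        intro p hp
        have := Fintype.mem_piFinset.1 hp a
        simp [hL'.1] at this
        simp only [h1 a p this, one_mul]
      · intro p hp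
        have := Fintype.mem_piFinset.1 hp a
        simp at this
        simp only [h0 a p this, zero_mul]
    · intro b hb hba
      have hbL : b ∈ L := by simpa [hba] using hb
      rw [Finset.sum_eq_zero, Finset.sum_eq_zero, sub_zero]
      · intro p hp
        have := Fintype.mem_piFinset.1 hp b
        simp at this
        rw [W_zero l b 0 0 (h0 b) L p _ hbL (by simp) this, mul_zero]
      · intro p hp
        have := Fintype.mem_piFinset.1 hp b
        simp at this
        rw [W_zero l b N 1 (h1 b) L p _ hbL (by simp) this, mul_zero]

theorem comb (l : ι → (ι → ℕ) → ZMod 2) (N : ℕ)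
    (h0 : ∀ i p, p i = 0 → l i p = 0) (h1 : ∀ i p, p i = N → l i p = 1) :
    ∃ p : ι → ℕ, (∀ j, p j < N) ∧ ∀ i, ∃ u v : ι → ℕ, (∀ j, p j ≤ u j ∧ u j ≤ p j + 1) ∧
      (∀ j, p j ≤ v j ∧ v j ≤ p j + 1) ∧ l i u = 0 ∧ l i v = 1 := by
  have h := total l N h0 h1 (Finset.univ : Finset ι).toList (Finset.nodup_toList _)
  have hne : (1 : ZMod 2) ≠ 0 := by decide
  rw [← h] at hne
  obtain ⟨p, hp, hW⟩ := Finset.exists_ne_zero_of_sum_ne_zero hne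
  refine ⟨p, ?_, ?_⟩
  · intro j
    simpa using Fintype.mem_piFinset.1 hp j
  · intro i
    obtain ⟨u, v, a1, a2, a3, a4, a5⟩ := W_ne l _ p _ hW i (by simp)
    have hu : ∀ j, p j ≤ u j ∧ u j ≤ p j + 1 := fun j => ⟨a1 j, by simpa using a3 j⟩
    have hv : ∀ j, p j ≤ v j ∧ v j ≤ p j + 1 := fun j => ⟨a2 j, by simpa using a4 j⟩
    have hc : ∀ x y : ZMod 2, x ≠ y → (x = 0 ∧ y = 1) ∨ (y = 0 ∧ x = 1) := by decide
    rcases hc _ _ a5 with h | h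
    · exact ⟨u, v, hu, hv, h⟩
    · exact ⟨v, u, hv, hu, h⟩

end PM

/-- Poincaré–Miranda theorem: if `f_1, …, f_r : [0,1]^r → ℝ` are continuous and
for each `i`, `f_i ≤ 0` on the face `x_i = 0` and `f_i ≥ 0` on the face
`x_i = 1`, then the `f_i` have a common zero in `[0,1]^r`. -/
theorem stmt17 (r : ℕ) (f : Fin r → (Fin r → ℝ) → ℝ)
    (hcont : ∀ i, ContinuousOn (f i) (Set.Icc (0 : Fin r → ℝ) 1))
    (h0 : ∀ i, ∀ x ∈ Set.Icc (0 : Fin r → ℝ) 1, x i = 0 → f i x ≤ 0)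
    (h1 : ∀ i, ∀ x ∈ Set.Icc (0 : Fin r → ℝ) 1, x i = 1 → 0 ≤ f i x) :
    ∃ x ∈ Set.Icc (0 : Fin r → ℝ) 1, ∀ i, f i x = 0 := by
  classical
  have main : ∀ n : ℕ, ∃ x ∈ Set.Icc (0 : Fin r → ℝ) 1, ∀ i, ∃ u ∈ Set.Icc (0 : Fin r → ℝ) 1,
      ∃ v ∈ Set.Icc (0 : Fin r → ℝ) 1, dist u x ≤ 1 / ((n : ℝ) + 1) ∧
        dist v x ≤ 1 / ((n : ℝ) + 1) ∧ f i u ≤ 0 ∧ 0 ≤ f i v := by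
    intro n
    have hn : (0 : ℝ) < (n : ℝ) + 1 := by positivity
    let g : (Fin r → ℕ) → (Fin r → ℝ) := fun p j => (p j : ℝ) / ((n : ℝ) + 1)
    have hg : ∀ p : Fin r → ℕ, (∀ j, p j ≤ n + 1) → g p ∈ Set.Icc (0 : Fin r → ℝ) 1 := by
      intro p hp
      refine ⟨fun j => ?_, fun j => ?_⟩
      · simp only [g, Pi.zero_apply]; positivity
      · simp only [g, Pi.one_apply]
        rw [div_le_one hn]
        exact_mod_cast hp j
    obtain ⟨p, hp, hpi⟩ := PM.comb (ι := Fin r) (fun i p => if p i = 0 then 0 else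
      if p i = n + 1 then 1 else if f i (g p) < 0 then 0 else 1) (n + 1)
      (by intro i p h; simp [h]) (by intro i p h; simp [h])
    refine ⟨g p, hg p (fun j => (hp j).le), fun i => ?_⟩
    obtain ⟨u, v, hu, hv, hlu, hlv⟩ := hpi i
    have hug := hg u (fun j => (hu j).2.trans (hp j))
    have hvg := hg v (fun j => (hv j).2.trans (hp j))
    have hd : ∀ w : Fin r → ℕ, (∀ j, p j ≤ w j ∧ w j ≤ p j + 1) →
        dist (g w) (g p) ≤ 1 / ((n : ℝ) + 1) := by
      intro w hw
      rw [dist_pi_le_iff (by positivity)]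
      intro j
      have h1 : (p j : ℝ) ≤ w j := by exact_mod_cast (hw j).1
      have h2 : (w j : ℝ) ≤ p j + 1 := by exact_mod_cast (hw j).2
      simp only [g]
      rw [Real.dist_eq, ← sub_div, abs_div, abs_of_pos hn, abs_of_nonneg (by linarith)]
      gcongr
      linarith
    refine ⟨g u, hug, g v, hvg, hd u hu, hd v hv, ?_, ?_⟩
    · by_cases c1 : u i = 0
      · exact h0 i _ hug (by simp [g, c1])
      · by_cases c2 : u i = n + 1
        · simp [c2] at hlu
        · by_cases c3 : f i (g u) < 0
          · exact c3.le
          · simp [c1, c2, c3] at hlu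
    · by_cases c1 : v i = 0
      · simp [c1] at hlv
      · by_cases c2 : v i = n + 1
        · exact h1 i _ hvg (by simp only [g, c2]; push_cast; exact div_self hn.ne')
        · by_cases c3 : f i (g v) < 0
          · simp [c1, c2, c3] at hlv
          · exact not_lt.1 c3
  choose x hx u hu v hv hdu hdv hfu hfv using main
  obtain ⟨y, hy, φ, hφ, hlim⟩ := (isCompact_Icc (a := (0 : Fin r → ℝ)) (b := 1)).tendsto_subseq hx
  refine ⟨y, hy, fun i => ?_⟩
  have hz : Filter.Tendsto (fun k => 1 / ((φ k : ℝ) + 1)) Filter.atTop (nhds 0) :=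
    tendsto_one_div_add_atTop_nhds_zero_nat.comp hφ.tendsto_atTop
  have conv : ∀ w : ℕ → Fin r → ℝ, (∀ n, w n ∈ Set.Icc (0 : Fin r → ℝ) 1) →
      (∀ n, dist (w n) (x n) ≤ 1 / ((n : ℝ) + 1)) →
      Filter.Tendsto (fun k => f i (w (φ k))) Filter.atTop (nhds (f i y)) := by
    intro w hw hd
    have hwy : Filter.Tendsto (fun k => w (φ k)) Filter.atTop (nhds y) := by
      refine (tendsto_iff_of_dist ?_).2 hlim
      exact squeeze_zero (fun _ => dist_nonneg) (fun k => hd (φ k)) hz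
    exact (hcont i y hy).tendsto.comp
      (tendsto_nhdsWithin_iff.2 ⟨hwy, Filter.Eventually.of_forall fun k => hw _⟩)
  apply le_antisymm
  · exact le_of_tendsto' (conv (fun n => u n i) (fun n => hu n i) (fun n => hdu n i))
      (fun k => hfu _ i)
  · exact ge_of_tendsto' (conv (fun n => v n i) (fun n => hv n i) (fun n => hdv n i))
      (fun k => hfv _ i)
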